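/- arXiv:1104.1884 — 2 statements merged into one kernel-verified Lean document; each statement's English description precedes it below -/
import Mathlib

section
/- Let an irreducible recurrent discrete-time Markov chain on a finite or countable state space be given, let i ≠ j be states, and let π := P_i(T_ij < T_ii) be the probability of hitting j before returning to i started from i; by irreducibility and recurrence π > 0. If π < 1, then under P_i the hitting time T_ij has the same distribution as V + U^(1) + ... + U^(M), where M, V, U^(1), U^(2), ... are independent, M is geometric with P(M = m) = (1-π)^m·π for m = 0, 1, 2, ..., each U^(r) is distributed as U_ij, and V is distributed as V_ij. If π = 1, then T_ij has the same distribution as V_ij. -/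
open Filter
open scoped ENNReal

namespace MCPaper

variable {E : Type*}

open Classical in
/-- `hitAvoid P t a n x` is the probability that the chain with transition matrix `P`,
started at `x`, is at `t` at time `n` while avoiding both `t` and `a` at times `1,…,n-1`.
For `t = a` this is the distribution of the first hitting time of `t`. -/
noncomputable def hitAvoid (P : E → E → ℝ≥0∞) (t a : E) : ℕ → E → ℝ≥0∞
  | 0, _ => 0
  | 1, x => P x t
  | n + 2, x => ∑' k : E, if k = t ∨ k = a then 0 else P x k * hitAvoid P t a (n + 1) k

/-- `firstHit P i j n = P_i(T_ij = n)`, the probability that the first hitting time of `j`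
(first return time if `i = j`) starting from `i` equals `n`. -/
noncomputable def firstHit (P : E → E → ℝ≥0∞) (i j : E) (n : ℕ) : ℝ≥0∞ :=
  hitAvoid P j j n i

/-- `P` is a stochastic matrix. -/
def IsStochastic (P : E → E → ℝ≥0∞) : Prop := ∀ i, ∑' j : E, P i j = 1

/-- irreducibility: any state can be reached from any other state. -/
def IsIrreducible (P : E → E → ℝ≥0∞) : Prop := ∀ i j : E, ∃ n : ℕ, 0 < firstHit P i j n

/-- recurrence: `P_i(T_ii < ∞) = 1` for every state `i`. -/
def IsRecurrent (P : E → E → ℝ≥0∞) : Prop := ∀ i : E, ∑' n : ℕ, firstHit P i i n = 1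

/-- the generalized moment `E f(T_ij)` of the first hitting time of `j` from `i`. -/
noncomputable def momGen (f : ℕ → ℝ) (P : E → E → ℝ≥0∞) (i j : E) : ℝ≥0∞ :=
  ∑' n : ℕ, ENNReal.ofReal (f n) * firstHit P i j n

/-- convolution of two probability mass functions on `ℕ`: the law of the sum of
independent random variables with laws `p` and `q`. -/
noncomputable def conv (p q : ℕ → ℝ≥0∞) (n : ℕ) : ℝ≥0∞ :=
  ∑ k ∈ Finset.range (n + 1), p k * q (n - k)

/-- `convPow p m` is the `m`-fold convolution power of `p`: the law of the sum of `m`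
i.i.d. random variables with law `p` (the Dirac mass at `0` for `m = 0`). -/
noncomputable def convPow (p : ℕ → ℝ≥0∞) : ℕ → ℕ → ℝ≥0∞
  | 0 => fun n => if n = 0 then 1 else 0
  | m + 1 => conv (convPow p m) p

/-!
Decomposing a trajectory at its first visit to `i` gives, for the unnormalised laws `u` of `U_ij`
and `v` of `V_ij`, the renewal equation `f = v + u * f` for the law `f` of `T_ij`. Since `u 0 = 0`,
iterating the equation gives `f = ∑ m, u ^ m * v`, where only the terms with `m ≤ n` charge the
time `n`.

The total mass of `v` is `π`. That of `u` is `1 - π`: decomposing the return time to `i` at the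
first visit to `j` gives `1 = |u| + |v| * P_j(T_ji < ∞) ≤ |u| + |v|`, and `|u| + |v| ≤ 1` is the
mass of the first entrance time into `{i, j}`. Normalising `u` and `v` turns `u ^ m * v` into
`(1 - π) ^ m * π` times a convolution of probability laws. Finally `π > 0`, since `v = 0` would
force `f = 0`.
-/

section Convolution

lemma conv_eq_sum_antidiagonal (p q : ℕ → ℝ≥0∞) (n : ℕ) :
    conv p q n = ∑ kl ∈ Finset.HasAntidiagonal.antidiagonal n, p kl.1 * q kl.2 :=
  (Finset.Nat.sum_antidiagonal_eq_sum_range_succ_mk (fun kl => p kl.1 * q kl.2) n).symm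

lemma conv_succ_of_apply_zero_eq_zero {p : ℕ → ℝ≥0∞} (hp : p 0 = 0) (q : ℕ → ℝ≥0∞) (n : ℕ) :
    conv p q (n + 1) = conv (fun k => p (k + 1)) q n := by
  simp [conv, Finset.sum_range_succ' _ (n + 1), hp]

lemma conv_const_mul_const_mul (c d : ℝ≥0∞) (p q : ℕ → ℝ≥0∞) (n : ℕ) :
    conv (fun k => c * p k) (fun k => d * q k) n = c * d * conv p q n := by
  simp only [conv, Finset.mul_sum, mul_mul_mul_comm]

lemma conv_tsum_const_mul_left {ι : Type*} (w : ι → ℝ≥0∞) (p : ι → ℕ → ℝ≥0∞) (q : ℕ → ℝ≥0∞)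
    (n : ℕ) :
    conv (fun k => ∑' x, w x * p x k) q n = ∑' x, w x * conv (p x) q n := by
  simp only [conv, ← ENNReal.tsum_mul_right, Finset.mul_sum, ← mul_assoc]
  exact (Summable.tsum_finsetSum fun _ _ => ENNReal.summable).symm

lemma tsum_conv (p q : ℕ → ℝ≥0∞) : ∑' n, conv p q n = (∑' n, p n) * ∑' n, q n := by
  calc ∑' n, conv p q n
      = ∑' n, ∑' kl : Finset.HasAntidiagonal.antidiagonal n, p kl.1.1 * q kl.1.2 := by
        simp only [conv_eq_sum_antidiagonal,
          Finset.tsum_subtype _ fun kl : ℕ × ℕ => p kl.1 * q kl.2]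
    _ = ∑' kl : ℕ × ℕ, p kl.1 * q kl.2 := by
        rw [← ENNReal.tsum_sigma, ← Finset.HasAntidiagonal.sigmaAntidiagonalEquivProd.tsum_eq]
        rfl
    _ = (∑' n, p n) * ∑' n, q n := by
        rw [ENNReal.tsum_prod', ← ENNReal.tsum_mul_right]
        simp only [ENNReal.tsum_mul_left]

lemma convPow_const_mul (c : ℝ≥0∞) (p : ℕ → ℝ≥0∞) (m : ℕ) :
    convPow (fun k => c * p k) m = fun n => c ^ m * convPow p m n := by
  induction m with
  | zero => simp [convPow]
  | succ m ih =>
    funext n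
    rw [convPow, ih, conv_const_mul_const_mul, pow_succ, convPow]

lemma mk_conv (p q : ℕ → ℝ≥0∞) :
    PowerSeries.mk (conv p q) = PowerSeries.mk p * PowerSeries.mk q := by
  ext n
  simp only [PowerSeries.coeff_mul, PowerSeries.coeff_mk, conv_eq_sum_antidiagonal]

lemma mk_convPow (p : ℕ → ℝ≥0∞) (m : ℕ) :
    PowerSeries.mk (convPow p m) = PowerSeries.mk p ^ m := by
  induction m with
  | zero => ext n; simp [convPow, PowerSeries.coeff_one]
  | succ m ih => rw [convPow, mk_conv, ih, pow_succ]

end Convolution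

section Renewal

lemma coeff_pow_mul_eq_zero_of_lt {R : Type*} [CommSemiring R] {A : PowerSeries R}
    (hA : PowerSeries.constantCoeff A = 0) (B : PowerSeries R) {n m : ℕ} (hnm : n < m) :
    PowerSeries.coeff n (A ^ m * B) = 0 :=
  have hdvd : PowerSeries.X ^ m ∣ A ^ m * B :=
    (pow_dvd_pow_of_dvd (PowerSeries.X_dvd_iff.mpr hA) m).mul_right B
  PowerSeries.X_pow_dvd_iff.mp hdvd n hnm

lemma eq_sum_pow_mul_add_of_eq_add_mul {R : Type*} [Semiring R] {a b f : R} (h : f = b + a * f)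
    (M : ℕ) : f = ∑ m ∈ Finset.range M, a ^ m * b + a ^ M * f := by
  induction M with
  | zero => simp
  | succ M ih =>
    have hstep : a ^ M * f = a ^ M * b + a ^ (M + 1) * f := by
      rw [pow_succ, mul_assoc, ← mul_add, ← h]
    rwa [Finset.sum_range_succ, add_assoc, ← hstep]

lemma eq_tsum_conv_convPow_of_renewal {u v f : ℕ → ℝ≥0∞} (hu : u 0 = 0)
    (h : ∀ n, f n = v n + conv u f n) (n : ℕ) : f n = ∑' m, conv (convPow u m) v n := by
  have hconst : PowerSeries.constantCoeff (PowerSeries.mk u) = 0 := by simpa using hu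
  have hseries : PowerSeries.mk f = PowerSeries.mk v + PowerSeries.mk u * PowerSeries.mk f := by
    rw [← mk_conv]
    ext n
    simpa using h n
  have hterm (m : ℕ) : conv (convPow u m) v n =
      PowerSeries.coeff n (PowerSeries.mk u ^ m * PowerSeries.mk v) := by
    rw [← mk_convPow, ← mk_conv, PowerSeries.coeff_mk]
  have hlarge : ∀ m ∉ Finset.range (n + 1), conv (convPow u m) v n = 0 := fun m hm => by
    rw [hterm, coeff_pow_mul_eq_zero_of_lt hconst _ (by simpa [Nat.lt_succ_iff] using hm)]
  calc f n = PowerSeries.coeff n (PowerSeries.mk f) := (PowerSeries.coeff_mk n f).symm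
    _ = ∑ m ∈ Finset.range (n + 1), conv (convPow u m) v n := by
        rw [eq_sum_pow_mul_add_of_eq_add_mul hseries (n + 1), map_add,
          coeff_pow_mul_eq_zero_of_lt hconst _ n.lt_succ_self, add_zero, map_sum]
        simp only [hterm]
    _ = ∑' m, conv (convPow u m) v n := (tsum_eq_sum hlarge).symm

end Renewal

section EntranceLaw

variable {P : E → E → ℝ≥0∞}

open Classical in
/-- `entranceLaw P A n x = P_x(T_A = n)`, where `T_A` is the first time `≥ 1` at which the chain is
in `A`. The laws of hitting times with or without a taboo state are bounded by its total mass. -/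
noncomputable def entranceLaw (P : E → E → ℝ≥0∞) (A : Set E) : ℕ → E → ℝ≥0∞
  | 0, _ => 0
  | n + 1, x => ∑' k, P x k * if k ∈ A then (if n = 0 then 1 else 0) else entranceLaw P A n k

lemma sum_range_entranceLaw_le_one (hP : ∀ x, ∑' k, P x k ≤ 1) (A : Set E) (N : ℕ) (x : E) :
    ∑ n ∈ Finset.range N, entranceLaw P A n x ≤ 1 := by
  induction N generalizing x with
  | zero => simp
  | succ N ih =>
    simp only [Finset.sum_range_succ', entranceLaw, add_zero]
    rw [← Summable.tsum_finsetSum fun _ _ => ENNReal.summable]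
    refine (ENNReal.tsum_le_tsum fun k => ?_).trans (hP x)
    rw [← Finset.mul_sum]
    refine mul_le_of_le_one_right' ?_
    by_cases hk : k ∈ A
    · simp only [hk, if_true, Finset.sum_ite_eq']
      split_ifs <;> simp
    · simpa only [hk, if_false] using ih k

lemma tsum_entranceLaw_le_one (hP : ∀ x, ∑' k, P x k ≤ 1) (A : Set E) (x : E) :
    ∑' n, entranceLaw P A n x ≤ 1 := by
  rw [ENNReal.tsum_eq_iSup_nat]
  exact iSup_le fun N => sum_range_entranceLaw_le_one hP A N x

open Classical in
lemma hitAvoid_succ (P : E → E → ℝ≥0∞) (t a : E) (n : ℕ) (x : E) :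
    hitAvoid P t a (n + 1) x = ∑' k, P x k *
      if k = t then (if n = 0 then 1 else 0) else if k = a then 0 else hitAvoid P t a n k := by
  cases n with
  | zero => simp [hitAvoid]
  | succ n =>
    rw [hitAvoid]
    refine tsum_congr fun k => ?_
    by_cases hkt : k = t <;> by_cases hka : k = a <;> simp [hkt, hka]

lemma hitAvoid_self_eq_entranceLaw (P : E → E → ℝ≥0∞) (t : E) (n : ℕ) (x : E) :
    hitAvoid P t t n x = entranceLaw P {t} n x := by
  induction n generalizing x with
  | zero => rfl
  | succ n ih =>
    rw [hitAvoid_succ, entranceLaw]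
    refine tsum_congr fun k => ?_
    by_cases hkt : k = t <;> simp [hkt, ih]

lemma hitAvoid_add_hitAvoid_eq_entranceLaw (P : E → E → ℝ≥0∞) {t a : E} (hta : t ≠ a) (n : ℕ)
    (x : E) : hitAvoid P t a n x + hitAvoid P a t n x = entranceLaw P {t, a} n x := by
  induction n generalizing x with
  | zero => exact add_zero 0
  | succ n ih =>
    rw [hitAvoid_succ, hitAvoid_succ, entranceLaw, ← ENNReal.tsum_add]
    refine tsum_congr fun k => ?_
    rw [← mul_add]
    by_cases hkt : k = t
    · simp [hkt, hta]
    · by_cases hka : k = a <;> simp [hkt, hka, hta.symm, ih]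

end EntranceLaw

section HittingTime

variable {P : E → E → ℝ≥0∞} {i j t a : E}

lemma hitAvoid_self_eq_add_conv (P : E → E → ℝ≥0∞) (hat : a ≠ t) (n : ℕ) (x : E) :
    hitAvoid P t t n x = hitAvoid P t a n x +
      conv (fun k => hitAvoid P a t k x) (fun k => hitAvoid P t t k a) n := by
  classical
  induction n generalizing x with
  | zero => simp [hitAvoid, conv]
  | succ n ih =>
    rw [conv_succ_of_apply_zero_eq_zero rfl]
    simp only [hitAvoid_succ P _ _ _ x]
    rw [conv_tsum_const_mul_left, ← ENNReal.tsum_add]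
    refine tsum_congr fun k => ?_
    rw [← mul_add]
    congr 1
    by_cases hkt : k = t
    · simp [hkt, hat.symm, conv]
    · by_cases hka : k = a
      · simp [hka, hat, conv]
      · simpa [hkt, hka] using ih k

/-- The two summands are `P_i(T_ii < T_ij)` and `P_i(T_ij < T_ii)`. -/
lemma tsum_hitAvoid_add_tsum_hitAvoid_eq_one (hP : ∀ x, ∑' k, P x k ≤ 1) (hij : i ≠ j)
    (hrec : ∑' n, firstHit P i i n = 1) :
    ∑' n, hitAvoid P i j n i + ∑' n, hitAvoid P j i n i = 1 := by
  refine le_antisymm ?_ ?_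
  · simp only [← ENNReal.tsum_add, hitAvoid_add_hitAvoid_eq_entranceLaw P hij]
    exact tsum_entranceLaw_le_one hP {i, j} i
  · have hreturn : ∑' n, hitAvoid P i i n j ≤ 1 := by
      simpa only [hitAvoid_self_eq_entranceLaw] using tsum_entranceLaw_le_one hP {i} j
    calc 1 = ∑' n, hitAvoid P i i n i := hrec.symm
      _ = ∑' n, hitAvoid P i j n i + (∑' n, hitAvoid P j i n i) * ∑' n, hitAvoid P i i n j := by
          simp only [hitAvoid_self_eq_add_conv P hij.symm _ i, ENNReal.tsum_add, tsum_conv]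
      _ ≤ ∑' n, hitAvoid P i j n i + ∑' n, hitAvoid P j i n i := by
          gcongr
          exact mul_le_of_le_one_right' hreturn

lemma firstHit_eq_tsum_conv_convPow (P : E → E → ℝ≥0∞) (hij : i ≠ j) (n : ℕ) :
    firstHit P i j n =
      ∑' m, conv (convPow (fun r => hitAvoid P i j r i) m) (fun r => hitAvoid P j i r i) n :=
  eq_tsum_conv_convPow_of_renewal rfl (fun n => hitAvoid_self_eq_add_conv P hij n i) n

lemma tsum_hitAvoid_pos_of_firstHit_pos (hij : i ≠ j) (hreach : ∃ n, 0 < firstHit P i j n) :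
    0 < ∑' n, hitAvoid P j i n i := by
  obtain ⟨n, hn⟩ := hreach
  contrapose! hn
  have hzero : ∀ r, hitAvoid P j i r i = 0 := ENNReal.tsum_eq_zero.mp (nonpos_iff_eq_zero.mp hn)
  simp [firstHit_eq_tsum_conv_convPow P hij, hzero, conv]

end HittingTime

lemma conv_convPow_eq_mul_conv_convPow_div {c d : ℝ≥0∞} (hc : c ≠ 0) (hc' : c ≠ ∞) (hd : d ≠ 0)
    (hd' : d ≠ ∞) (p q : ℕ → ℝ≥0∞) (m n : ℕ) :
    conv (convPow p m) q n =
      c ^ m * d * conv (convPow (fun r => p r / c) m) (fun r => q r / d) n := by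
  rw [← conv_const_mul_const_mul, ← convPow_const_mul]
  simp only [ENNReal.mul_div_cancel hc hc', ENNReal.mul_div_cancel hd hd']

theorem stmt_13_general (P : E → E → ℝ≥0∞) {i j : E} (hij : i ≠ j)
    (hhit : ∑' n, hitAvoid P i j n i + ∑' n, hitAvoid P j i n i = 1)
    (hreach : ∃ n, 0 < firstHit P i j n) :
    0 < (∑' n : ℕ, hitAvoid P j i n i) ∧
      ((∑' n : ℕ, hitAvoid P j i n i) < 1 →
        ∀ n : ℕ,
          firstHit P i j n =
            ∑' m : ℕ,
              (1 - ∑' k : ℕ, hitAvoid P j i k i) ^ m * (∑' k : ℕ, hitAvoid P j i k i) *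
                conv
                  (convPow (fun r : ℕ => hitAvoid P i j r i / ∑' k : ℕ, hitAvoid P i j k i) m)
                  (fun r : ℕ => hitAvoid P j i r i / ∑' k : ℕ, hitAvoid P j i k i) n) ∧
      ((∑' n : ℕ, hitAvoid P j i n i) = 1 →
        ∀ n : ℕ,
          firstHit P i j n = hitAvoid P j i n i / ∑' k : ℕ, hitAvoid P j i k i) := by
  have hpos := tsum_hitAvoid_pos_of_firstHit_pos hij hreach
  set π := ∑' n, hitAvoid P j i n i
  set u := ∑' n, hitAvoid P i j n i
  have hπ_top : π ≠ ∞ := ne_top_of_le_ne_top ENNReal.one_ne_top (hhit ▸ le_add_self)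
  have hu : u = 1 - π := ENNReal.eq_sub_of_add_eq hπ_top hhit
  refine ⟨hpos, fun hlt n => ?_, fun heq n => ?_⟩
  · have hu_ne : u ≠ 0 := hu ▸ (tsub_pos_of_lt hlt).ne'
    have hu_top : u ≠ ∞ := ne_top_of_le_ne_top ENNReal.one_ne_top (hhit ▸ le_self_add)
    rw [firstHit_eq_tsum_conv_convPow P hij, ← hu]
    exact tsum_congr fun m =>
      conv_convPow_eq_mul_conv_convPow_div hu_ne hu_top hpos.ne' hπ_top _ _ m n
  · have hzero : ∀ r, hitAvoid P i j r i = 0 :=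
      ENNReal.tsum_eq_zero.mp (show u = 0 by rw [hu, heq, tsub_self])
    rw [heq, div_one]
    simpa [hzero, conv, firstHit] using hitAvoid_self_eq_add_conv P hij n i

theorem stmt_13 (S : Type*) [Countable S] (P : S → S → ℝ≥0∞)
    (hP : IsStochastic P) (hirr : IsIrreducible P) (hrec : IsRecurrent P)
    (i j : S) (hij : i ≠ j) :
    0 < (∑' n : ℕ, hitAvoid P j i n i) ∧
      ((∑' n : ℕ, hitAvoid P j i n i) < 1 →
        ∀ n : ℕ,
          firstHit P i j n =
            ∑' m : ℕ,
              (1 - ∑' k : ℕ, hitAvoid P j i k i) ^ m * (∑' k : ℕ, hitAvoid P j i k i) *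
                conv
                  (convPow (fun r : ℕ => hitAvoid P i j r i / ∑' k : ℕ, hitAvoid P i j k i) m)
                  (fun r : ℕ => hitAvoid P j i r i / ∑' k : ℕ, hitAvoid P j i k i) n) ∧
      ((∑' n : ℕ, hitAvoid P j i n i) = 1 →
        ∀ n : ℕ,
          firstHit P i j n = hitAvoid P j i n i / ∑' k : ℕ, hitAvoid P j i k i) :=
  stmt_13_general P hij
    (tsum_hitAvoid_add_tsum_hitAvoid_eq_one (fun x => (hP x).le) hij (hrec i)) (hirr i j)

end MCPaper
end

section
/- Let f : ℕ → (0,∞) be non-decreasing with f(n) → ∞. Suppose there exist independent random variables U_1 and U_2 taking values in the positive integers, each with infinite support, such that E f(U_1) < ∞ and E f(U_2) < ∞ but E f(U_1 + U_2) = ∞. Then there exists an irreducible recurrent discrete-time Markov chain on a countable state space with two states 0 and 1 such that E f(T_11) < ∞ while E f(T_00) = ∞; in particular f does not belong to the class G. -/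
/-!
From a state `o` flip a coin: on heads step to a state `z` and come back to `o` in such a way that
the whole excursion lasts `max U₁ 2`; on tails make an excursion of length `max U₂ 1` that avoids
`z`. The return time to `o` is a mixture of `max U₁ 2` and `max U₂ 1`, so it has a finite
`f`-moment. With probability `1/4`, however, the coin shows tails and then heads after the chain
started at `z` has reached `o`, and on this event the return time to `z` is the sum of independent
copies of `max U₁ 2` and `max U₂ 1`, because the final step from `o` to `z` makes up for the
missing first step of the `U₁`-excursion. Hence this return time has infinite `f`-moment.

Recurrence rests on the fact that the hitting probabilities of a state are the least solution of
the superharmonicity inequalities of the first-step analysis.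
-/

open Filter
open scoped ENNReal

namespace MCPaper

variable {E : Type*}

/-- the class `𝒢`: a finite generalized `f`-moment of the return time of one state implies
finiteness for the return times of all states, for every irreducible recurrent chain. -/
def MemG (f : ℕ → ℝ) : Prop :=
  ∀ (S : Type) [Countable S] (P : S → S → ℝ≥0∞),
    IsStochastic P → IsIrreducible P → IsRecurrent P →
      ∀ i : S, momGen f P i i < ⊤ → ∀ j : S, momGen f P j j < ⊤

/-- the class `ℋ`: finiteness of `E f(T_ij)` and `E f(T_ji)` for a pair of states implies
finiteness of `E f(T_kl)` for all pairs, for every irreducible recurrent chain. -/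
def MemH (f : ℕ → ℝ) : Prop :=
  ∀ (S : Type) [Countable S] (P : S → S → ℝ≥0∞),
    IsStochastic P → IsIrreducible P → IsRecurrent P →
      ∀ i j : S, momGen f P i j < ⊤ → momGen f P j i < ⊤ →
        ∀ k l : S, momGen f P k l < ⊤

section FirstStep

variable (P : E → E → ℝ≥0∞)

open Classical in
lemma firstHit_succ (i j : E) (n : ℕ) :
    firstHit P i j (n + 1) =
      ∑' k, P i k * if k = j then (if n = 0 then 1 else 0) else firstHit P k j n := by
  cases n with
  | zero =>
    rw [tsum_eq_single j (by simp +contextual [firstHit, hitAvoid])]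
    simp [firstHit, hitAvoid]
  | succ n =>
    rw [firstHit, hitAvoid]
    refine tsum_congr fun k => ?_
    by_cases hk : k = j <;> simp [hk, firstHit]

/-- `hitMoment F P i j = E F(T_ij)` on the event that `j` is hit. In contrast to `momGen`, the
weight `F` takes values in `ℝ≥0∞`. -/
noncomputable def hitMoment (F : ℕ → ℝ≥0∞) (P : E → E → ℝ≥0∞) (i j : E) : ℝ≥0∞ :=
  ∑' n, F n * firstHit P i j n

open Classical in
/-- The analogue of `hitMoment` for the entrance time `inf {n ≥ 0 : X_n = j}`, which vanishes if the
chain starts at `j`. -/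
noncomputable def entryMoment (F : ℕ → ℝ≥0∞) (P : E → E → ℝ≥0∞) (i j : E) : ℝ≥0∞ :=
  if i = j then F 0 else hitMoment F P i j

lemma entryMoment_self (F : ℕ → ℝ≥0∞) (j : E) : entryMoment F P j j = F 0 := if_pos rfl

lemma entryMoment_of_ne (F : ℕ → ℝ≥0∞) {i j : E} (h : i ≠ j) :
    entryMoment F P i j = hitMoment F P i j := if_neg h

lemma hitMoment_eq_tsum (F : ℕ → ℝ≥0∞) (i j : E) :
    hitMoment F P i j = ∑' k, P i k * entryMoment (fun n => F (n + 1)) P k j := by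
  have firstHit_zero : firstHit P i j 0 = 0 := by simp [firstHit, hitAvoid]
  rw [hitMoment, tsum_eq_zero_add' ENNReal.summable, firstHit_zero, mul_zero, zero_add]
  simp_rw [firstHit_succ, ← ENNReal.tsum_mul_left]
  rw [ENNReal.tsum_comm]
  refine tsum_congr fun k => ?_
  simp_rw [mul_left_comm (F _), ENNReal.tsum_mul_left]
  by_cases hk : k = j <;> simp [entryMoment, hitMoment, hk]

/-- `hitProb P i j = P_i(T_ij < ∞)`. -/
noncomputable def hitProb (P : E → E → ℝ≥0∞) (i j : E) : ℝ≥0∞ :=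
  ∑' n, firstHit P i j n

lemma hitMoment_one (i j : E) : hitMoment 1 P i j = hitProb P i j := by
  simp [hitMoment, hitProb]

open Classical in
lemma hitProb_eq_tsum (i j : E) :
    hitProb P i j = ∑' k, P i k * if k = j then 1 else hitProb P k j := by
  simp_rw [← hitMoment_one]
  exact hitMoment_eq_tsum P 1 i j

end FirstStep

section HittingProbabilities

variable {P : E → E → ℝ≥0∞}

lemma le_hitProb (i j : E) : P i j ≤ hitProb P i j :=
  ENNReal.le_tsum (f := firstHit P i j) 1

open Classical in
lemma hitProb_le_of_superharmonic {g : E → ℝ≥0∞} {j : E}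
    (hg : ∀ i, ∑' k, P i k * (if k = j then 1 else g k) ≤ g i) (i : E) :
    hitProb P i j ≤ g i := by
  have partial_le (N : ℕ) : ∀ i, hitMoment (fun n => if n < N then 1 else 0) P i j ≤ g i := by
    induction N with
    | zero => simp [hitMoment]
    | succ N ih =>
      intro i
      simp_rw [hitMoment_eq_tsum, add_lt_add_iff_right]
      refine le_trans (ENNReal.tsum_le_tsum fun k => ?_) (hg i)
      gcongr
      by_cases hk : k = j
      · rw [entryMoment, if_pos hk, if_pos hk]
        split_ifs <;> simp
      · simpa [entryMoment, hk] using ih k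
  refine ENNReal.tsum_le_of_sum_range_le fun N => le_trans (le_of_eq ?_) (partial_le N i)
  rw [hitMoment, tsum_eq_sum (s := Finset.range N) (by simp +contextual)]
  exact Finset.sum_congr rfl fun n hn => by simp [Finset.mem_range.1 hn]

lemma hitProb_le_one (hP : IsStochastic P) (i j : E) : hitProb P i j ≤ 1 :=
  hitProb_le_of_superharmonic (g := 1) (fun i => by simp [hP i]) i

lemma hitProb_mul_hitProb_le (hP : IsStochastic P) (i k j : E) :
    hitProb P i k * hitProb P k j ≤ hitProb P i j := by
  classical
  rcases eq_or_ne (hitProb P k j) 0 with h0 | h0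
  · simp [h0]
  have htop : hitProb P k j ≠ ⊤ := ne_top_of_le_ne_top ENNReal.one_ne_top (hitProb_le_one hP k j)
  rw [← ENNReal.le_div_iff_mul_le (.inl h0) (.inl htop)]
  refine hitProb_le_of_superharmonic (g := fun l => hitProb P l j / hitProb P k j) (fun l => ?_) i
  rw [ENNReal.le_div_iff_mul_le (.inl h0) (.inl htop), ← ENNReal.tsum_mul_right,
    hitProb_eq_tsum P l j]
  refine ENNReal.tsum_le_tsum fun m => ?_
  rw [mul_assoc]
  gcongr
  have hdiv : (if m = k then 1 else hitProb P m j / hitProb P k j) * hitProb P k j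
      = hitProb P m j := by
    split_ifs with hm
    · rw [hm, one_mul]
    · exact ENNReal.div_mul_cancel h0 htop
  rw [hdiv]
  split_ifs
  exacts [hitProb_le_one hP m j, le_rfl]

/-- If `ρ` denotes the hitting probabilities of `j`, then `(ρ - a) / b` satisfies the same one-step
equations, and minimality of `ρ` gives `ρ ≤ (ρ - a) / b`. -/
lemma add_mul_hitProb_le (hP : IsStochastic P) {j : E} {a b : ℝ≥0∞} (hab : a + b = 1)
    (hle : ∀ i, a ≤ hitProb P i j) (i : E) : a + b * hitProb P i j ≤ hitProb P i j := by
  classical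
  rcases eq_or_ne b 0 with rfl | hb0
  · simpa using hle i
  obtain ⟨ha, hb⟩ : a ≠ ⊤ ∧ b ≠ ⊤ := ENNReal.add_ne_top.1 (hab ▸ ENNReal.one_ne_top)
  have hmin : hitProb P i j ≤ (hitProb P i j - a) / b := by
    refine hitProb_le_of_superharmonic (g := fun l => (hitProb P l j - a) / b) (fun l => ?_) i
    rw [ENNReal.le_div_iff_mul_le (.inl hb0) (.inl hb)]
    refine ENNReal.le_sub_of_add_le_right ha (le_of_eq ?_)
    calc (∑' k, P l k * if k = j then 1 else (hitProb P k j - a) / b) * b + a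
        = ∑' k, P l k * ((if k = j then 1 else (hitProb P k j - a) / b) * b + a) := by
          simp_rw [mul_add, ENNReal.tsum_add, ← mul_assoc, ENNReal.tsum_mul_right, hP l, one_mul]
      _ = ∑' k, P l k * if k = j then 1 else hitProb P k j := by
          refine tsum_congr fun k => ?_
          split_ifs
          · rw [one_mul, add_comm, hab]
          · rw [ENNReal.div_mul_cancel hb0 hb, tsub_add_cancel_of_le (hle k)]
      _ = hitProb P l j := (hitProb_eq_tsum P l j).symm
  rw [ENNReal.le_div_iff_mul_le (.inl hb0) (.inl hb)] at hmin
  calc a + b * hitProb P i j ≤ a + (hitProb P i j - a) := by gcongr; rwa [mul_comm]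
    _ = hitProb P i j := add_tsub_cancel_of_le (hle i)

lemma hitProb_eq_one_of_forall_le (hP : IsStochastic P) {j : E} {a : ℝ≥0∞} (ha : a ≠ 0)
    (hle : ∀ i, a ≤ hitProb P i j) (i : E) : hitProb P i j = 1 := by
  have hρ : hitProb P i j ≤ 1 := hitProb_le_one hP i j
  have ha1 : a ≤ 1 := (hle i).trans hρ
  have hab : a + (1 - a) = 1 := add_tsub_cancel_of_le ha1
  have hfin : (1 - a) * hitProb P i j ≠ ⊤ :=
    ENNReal.mul_ne_top (ENNReal.sub_ne_top ENNReal.one_ne_top)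
      (ne_top_of_le_ne_top ENNReal.one_ne_top hρ)
  have hmul : a * 1 ≤ a * hitProb P i j := by
    rw [mul_one, ← ENNReal.add_le_add_iff_right hfin, ← add_mul, hab, one_mul]
    exact add_mul_hitProb_le hP hab hle i
  exact le_antisymm hρ
    ((ENNReal.mul_le_mul_iff_right ha (ne_top_of_le_ne_top ENNReal.one_ne_top ha1)).1 hmul)

lemma hitProb_eq_one_of_hub (hP : IsStochastic P) {o : E} (hto : ∀ i, hitProb P i o = 1)
    {j : E} (hfrom : hitProb P o j ≠ 0) (i : E) : hitProb P i j = 1 :=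
  hitProb_eq_one_of_forall_le hP hfrom
    (fun l => by simpa [hto l] using hitProb_mul_hitProb_le hP l o j) i

lemma isIrreducible_of_hitProb_ne_zero (h : ∀ i j, hitProb P i j ≠ 0) : IsIrreducible P := by
  intro i j
  obtain ⟨n, hn⟩ := ENNReal.summable.tsum_ne_zero_iff.1 (h i j)
  exact ⟨n, pos_iff_ne_zero.2 hn⟩

lemma hitProb_ne_zero_trans (hP : IsStochastic P) {i k j : E} (hik : hitProb P i k ≠ 0)
    (hkj : hitProb P k j ≠ 0) : hitProb P i j ≠ 0 :=
  ne_bot_of_le_ne_bot (mul_ne_zero hik hkj) (hitProb_mul_hitProb_le hP i k j)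

end HittingProbabilities

/-- The chain of the counterexample, with `o = some 0` and `z = none`. The states `some n` form a
line that is descended deterministically, so that an excursion from `o` entering the line at
`some k` lasts `k + 1`, and it lasts `k + 2` if it enters there after a detour through `z`. The
laws `v` and `w` are those of the entrance heights from `z` and from `o`. -/
noncomputable def excursionChain (v w : PMF ℕ) : Option ℕ → Option ℕ → ℝ≥0∞
  | none, none => 0
  | none, some k => v k
  | some 0, none => 2⁻¹
  | some 0, some k => 2⁻¹ * w k
  | some (_ + 1), none => 0
  | some (n + 1), some k => if k = n then 1 else 0

lemma tsum_option (g : Option E → ℝ≥0∞) : ∑' x, g x = g none + ∑' i, g (some i) := by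
  rw [← (Equiv.optionEquivSumPUnit.{0} E).symm.tsum_eq g,
    Summable.tsum_sum ENNReal.summable ENNReal.summable]
  simp [add_comm]

namespace excursionChain

variable (v w : PMF ℕ)

lemma tsum_none_mul (g : Option ℕ → ℝ≥0∞) :
    ∑' x, excursionChain v w none x * g x = ∑' k, v k * g (some k) := by
  simp [tsum_option, excursionChain]

lemma tsum_zero_mul (g : Option ℕ → ℝ≥0∞) :
    ∑' x, excursionChain v w (some 0) x * g x = 2⁻¹ * g none + 2⁻¹ * ∑' k, w k * g (some k) := by
  simp [tsum_option, excursionChain, mul_assoc, ENNReal.tsum_mul_left]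

lemma tsum_succ_mul (g : Option ℕ → ℝ≥0∞) (n : ℕ) :
    ∑' x, excursionChain v w (some (n + 1)) x * g x = g (some n) := by
  simp [tsum_option, excursionChain]

lemma isStochastic : IsStochastic (excursionChain v w) := by
  rintro (_ | _ | n)
  · simpa using tsum_none_mul v w 1
  · simpa [ENNReal.inv_two_add_inv_two] using tsum_zero_mul v w 1
  · simpa using tsum_succ_mul v w 1 n

lemma entryMoment_some_zero (F : ℕ → ℝ≥0∞) (n : ℕ) :
    entryMoment F (excursionChain v w) (some n) (some 0) = F n := by
  induction n generalizing F with
  | zero => exact entryMoment_self _ F _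
  | succ n ih => rw [entryMoment_of_ne _ F (by simp), hitMoment_eq_tsum, tsum_succ_mul, ih]

lemma hitMoment_none_zero (F : ℕ → ℝ≥0∞) :
    hitMoment F (excursionChain v w) none (some 0) = ∑' k, v k * F (k + 1) := by
  simp_rw [hitMoment_eq_tsum, tsum_none_mul, entryMoment_some_zero]

lemma hitMoment_zero_zero (F : ℕ → ℝ≥0∞) :
    hitMoment F (excursionChain v w) (some 0) (some 0)
      = 2⁻¹ * ∑' k, v k * F (k + 2) + 2⁻¹ * ∑' k, w k * F (k + 1) := by
  rw [hitMoment_eq_tsum, tsum_zero_mul, entryMoment_of_ne _ _ (by simp), hitMoment_none_zero]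
  simp_rw [entryMoment_some_zero]

lemma hitMoment_some_none (F : ℕ → ℝ≥0∞) (n : ℕ) :
    hitMoment F (excursionChain v w) (some n) none
      = hitMoment (fun m => F (m + n)) (excursionChain v w) (some 0) none := by
  induction n generalizing F with
  | zero => rfl
  | succ n ih =>
    rw [hitMoment_eq_tsum, tsum_succ_mul, entryMoment_of_ne _ _ (by simp), ih]
    simp_rw [add_assoc]

lemma hitMoment_zero_none (F : ℕ → ℝ≥0∞) :
    hitMoment F (excursionChain v w) (some 0) none
      = 2⁻¹ * F 1 + 2⁻¹ * ∑' k, w k *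
          hitMoment (fun n => F (n + k + 1)) (excursionChain v w) (some 0) none := by
  rw [hitMoment_eq_tsum, tsum_zero_mul, entryMoment_self]
  congr! 4 with k
  rw [entryMoment_of_ne _ _ (Option.some_ne_none k), hitMoment_some_none]

lemma hitMoment_none_none (F : ℕ → ℝ≥0∞) :
    hitMoment F (excursionChain v w) none none
      = ∑' k, v k * hitMoment (fun n => F (n + k + 1)) (excursionChain v w) (some 0) none := by
  rw [hitMoment_eq_tsum, tsum_none_mul]
  refine tsum_congr fun k => ?_
  rw [entryMoment_of_ne _ _ (Option.some_ne_none k), hitMoment_some_none]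

lemma le_hitMoment_zero_none (F : ℕ → ℝ≥0∞) :
    2⁻¹ * 2⁻¹ * ∑' k, w k * F (k + 2) ≤ hitMoment F (excursionChain v w) (some 0) none := by
  have direct_step (k : ℕ) : 2⁻¹ * F (k + 2)
      ≤ hitMoment (fun n => F (n + k + 1)) (excursionChain v w) (some 0) none := by
    rw [hitMoment_zero_none, show 1 + k + 1 = k + 2 by ring]
    exact le_self_add
  calc 2⁻¹ * 2⁻¹ * ∑' k, w k * F (k + 2) = 2⁻¹ * ∑' k, w k * (2⁻¹ * F (k + 2)) := by
        simp_rw [mul_left_comm (w _), ENNReal.tsum_mul_left, mul_assoc]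
    _ ≤ 2⁻¹ * ∑' k, w k *
          hitMoment (fun n => F (n + k + 1)) (excursionChain v w) (some 0) none := by
        gcongr with k
        exact direct_step k
    _ ≤ hitMoment F (excursionChain v w) (some 0) none := by
        rw [hitMoment_zero_none v w F]
        exact le_add_self

lemma le_hitMoment_none_none (F : ℕ → ℝ≥0∞) :
    2⁻¹ * 2⁻¹ * ∑' k, v k * ∑' m, w m * F (k + m + 3)
      ≤ hitMoment F (excursionChain v w) none none := by
  rw [hitMoment_none_none, ← ENNReal.tsum_mul_left]
  refine ENNReal.tsum_le_tsum fun k => ?_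
  rw [mul_left_comm]
  gcongr
  refine le_trans (le_of_eq ?_) (le_hitMoment_zero_none v w fun n => F (n + k + 1))
  congr! 5 with m
  ring

lemma hitProb_zero_right (i : Option ℕ) : hitProb (excursionChain v w) i (some 0) = 1 := by
  rw [← hitMoment_one]
  rcases i with _ | _ | n
  · simp [hitMoment_none_zero]
  · simp [hitMoment_zero_zero, ENNReal.inv_two_add_inv_two]
  · rw [← entryMoment_of_ne _ _ (by simp), entryMoment_some_zero, Pi.one_apply]

variable {v w}

lemma hitProb_zero_left_ne_zero (hvw : ¬ BddAbove (v.support ∪ w.support)) (j : Option ℕ) :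
    hitProb (excursionChain v w) (some 0) j ≠ 0 := by
  have hP := isStochastic v w
  have of_step {i j} (h : excursionChain v w i j ≠ 0) : hitProb (excursionChain v w) i j ≠ 0 :=
    ne_bot_of_le_ne_bot h (le_hitProb i j)
  have to_none : hitProb (excursionChain v w) (some 0) none ≠ 0 :=
    of_step (by simp [excursionChain])
  cases j with
  | none => exact to_none
  | some m =>
    obtain ⟨n, hn, hmn⟩ := not_bddAbove_iff.1 hvw m
    have to_line : hitProb (excursionChain v w) (some 0) (some n) ≠ 0 := by
      rcases hn with hn | hn
      · exact hitProb_ne_zero_trans hP to_none (of_step ((PMF.mem_support_iff v n).1 hn))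
      · exact of_step (mul_ne_zero (by simp) ((PMF.mem_support_iff w n).1 hn))
    have step_down (l : ℕ) : hitProb (excursionChain v w) (some (l + 1)) (some l) ≠ 0 :=
      of_step (by simp [excursionChain])
    exact Nat.decreasingInduction (fun l _ ih => hitProb_ne_zero_trans hP ih (step_down l))
      to_line hmn.le

lemma hitProb_eq_one (hvw : ¬ BddAbove (v.support ∪ w.support)) (i j : Option ℕ) :
    hitProb (excursionChain v w) i j = 1 :=
  hitProb_eq_one_of_hub (isStochastic v w) (hitProb_zero_right v w)
    (hitProb_zero_left_ne_zero hvw j) i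

lemma isRecurrent (hvw : ¬ BddAbove (v.support ∪ w.support)) : IsRecurrent (excursionChain v w) :=
  fun i => hitProb_eq_one hvw i i

lemma isIrreducible (hvw : ¬ BddAbove (v.support ∪ w.support)) :
    IsIrreducible (excursionChain v w) :=
  isIrreducible_of_hitProb_ne_zero fun i j => by simp [hitProb_eq_one hvw i j]

end excursionChain

section Laws

lemma tsum_mul_conv (F p q : ℕ → ℝ≥0∞) :
    ∑' n, F n * conv p q n = ∑' k, p k * ∑' m, q m * F (k + m) := by
  simp_rw [← ENNReal.tsum_mul_left]
  rw [← ENNReal.tsum_prod (f := fun k m => p k * (q m * F (k + m))),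
    ← Finset.HasAntidiagonal.sigmaAntidiagonalEquivProd.tsum_eq, ENNReal.tsum_sigma']
  refine tsum_congr fun n => ?_
  rw [conv, ← Finset.Nat.sum_antidiagonal_eq_sum_range_succ (fun k m => p k * q m),
    Finset.mul_sum, ← Finset.sum_coe_sort, tsum_fintype]
  refine Finset.sum_congr rfl fun ⟨km, hkm⟩ _ => ?_
  simp only [Finset.HasAntidiagonal.sigmaAntidiagonalEquivProd_apply,
    ← Finset.HasAntidiagonal.mem_antidiagonal.1 hkm]
  ring

lemma tsum_map_mul {α β : Type*} (p : PMF α) (g : α → β) (G : β → ℝ≥0∞) :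
    ∑' b, p.map g b * G b = ∑' a, p a * G (g a) := by
  simp_rw [PMF.map_apply, ← ENNReal.tsum_mul_right]
  rw [ENNReal.tsum_comm]
  simp [ite_mul]

variable {F : ℕ → ℝ≥0∞}

lemma not_bddAbove_support_of_tsum_eq_top (hF : Monotone F) (hfin : ∀ n, F n ≠ ⊤)
    {v w : PMF ℕ} (hsum : ∑' k, v k * ∑' m, w m * F (k + m) = ⊤) :
    ¬ BddAbove (v.support ∪ w.support) := by
  rintro ⟨B, hB⟩
  have hle (k m : ℕ) : v k * (w m * F (k + m)) ≤ v k * (w m * F (B + B)) := by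
    by_cases hk : v k = 0
    · simp [hk]
    by_cases hm : w m = 0
    · simp [hm]
    have hkB : k ≤ B := hB (.inl ((PMF.mem_support_iff v k).2 hk))
    have hmB : m ≤ B := hB (.inr ((PMF.mem_support_iff w m).2 hm))
    gcongr
    exact hF (add_le_add hkB hmB)
  refine hfin (B + B) (top_unique ?_)
  calc ⊤ = ∑' k, ∑' m, v k * (w m * F (k + m)) := by simp_rw [ENNReal.tsum_mul_left, hsum]
    _ ≤ ∑' k, ∑' m, v k * (w m * F (B + B)) :=
        ENNReal.tsum_le_tsum fun k => ENNReal.tsum_le_tsum fun m => hle k m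
    _ = F (B + B) := by simp [ENNReal.tsum_mul_left, ENNReal.tsum_mul_right]

/-- With truncated subtraction `n - c + c = max n c`. -/
lemma tsum_map_sub_mul_lt_top {c : ℕ} (hc : F c ≠ ⊤) {p : PMF ℕ} (hp : ∑' n, F n * p n < ⊤) :
    ∑' k, p.map (· - c) k * F (k + c) < ⊤ := by
  have hle (n : ℕ) : F (n - c + c) ≤ F n + F c := by
    rw [Nat.sub_add_eq_max]
    rcases max_choice n c with h | h <;> simp [h]
  calc ∑' k, p.map (· - c) k * F (k + c) = ∑' n, p n * F (n - c + c) := tsum_map_mul p _ _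
    _ ≤ ∑' n, p n * (F n + F c) := by gcongr with n; exact hle n
    _ = ∑' n, F n * p n + F c := by
        simp_rw [mul_add, ENNReal.tsum_add, ENNReal.tsum_mul_right, p.tsum_coe, one_mul, mul_comm]
    _ < ⊤ := ENNReal.add_lt_top.2 ⟨hp, hc.lt_top⟩

lemma tsum_mul_conv_le_tsum_map_sub (hF : Monotone F) (p q : PMF ℕ) (c d : ℕ) :
    ∑' n, F n * conv p q n
      ≤ ∑' k, p.map (· - c) k * ∑' m, q.map (· - d) m * F (k + m + (c + d)) := by
  rw [tsum_mul_conv, tsum_map_mul]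
  simp_rw [tsum_map_mul]
  gcongr with k m
  exact hF (by omega)

end Laws

lemma not_memG_of_exists {f : ℕ → ℝ}
    (h : ∃ (S : Type) (_ : Countable S) (P : S → S → ℝ≥0∞) (z o : S),
      IsStochastic P ∧ IsIrreducible P ∧ IsRecurrent P ∧
        momGen f P o o < ⊤ ∧ momGen f P z z = ⊤) :
    ¬ MemG f := by
  obtain ⟨S, _, P, z, o, hP, hirr, hrec, ho, hz⟩ := h
  exact fun hG => (hG S P hP hirr hrec o ho z).ne hz

theorem stmt_14_general {F : ℕ → ℝ≥0∞} (hF : Monotone F) (hfin : ∀ n, F n ≠ ⊤) (p q : PMF ℕ)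
    (hp : ∑' n, F n * p n < ⊤) (hq : ∑' n, F n * q n < ⊤)
    (hsum : ∑' n, F n * conv p q n = ⊤) :
    ∃ (S : Type) (_ : Countable S) (P : S → S → ℝ≥0∞) (z o : S),
      IsStochastic P ∧ IsIrreducible P ∧ IsRecurrent P ∧
        hitMoment F P o o < ⊤ ∧ hitMoment F P z z = ⊤ := by
  set v := p.map (· - 2)
  set w := q.map (· - 1)
  have hv : ∑' k, v k * F (k + 2) < ⊤ := tsum_map_sub_mul_lt_top (hfin 2) hp
  have hw : ∑' k, w k * F (k + 1) < ⊤ := tsum_map_sub_mul_lt_top (hfin 1) hq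
  have hvw : ∑' k, v k * ∑' m, w m * F (k + m + 3) = ⊤ :=
    top_unique (hsum.ge.trans (tsum_mul_conv_le_tsum_map_sub hF p q 2 1))
  have hsupp : ¬ BddAbove (v.support ∪ w.support) :=
    not_bddAbove_support_of_tsum_eq_top (F := fun n => F (n + 3))
      (fun _ _ h => hF (by omega)) (fun n => hfin (n + 3)) hvw
  refine ⟨Option ℕ, inferInstance, excursionChain v w, none, some 0,
    excursionChain.isStochastic v w, excursionChain.isIrreducible hsupp,
    excursionChain.isRecurrent hsupp, ?_, top_unique ?_⟩
  · rw [excursionChain.hitMoment_zero_zero]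
    exact ENNReal.add_lt_top.2
      ⟨ENNReal.mul_lt_top (by simp) hv, ENNReal.mul_lt_top (by simp) hw⟩
  · refine le_trans ?_ (excursionChain.le_hitMoment_none_none v w F)
    rw [hvw, ENNReal.mul_top (by simp)]

theorem stmt_14 (f : ℕ → ℝ) (hpos : ∀ n, 0 < f n) (hmono : Monotone f)
    (htop : Tendsto f atTop atTop)
    (u₁ u₂ : ℕ → ℝ≥0∞) (h₁0 : u₁ 0 = 0) (h₂0 : u₂ 0 = 0)
    (h₁s : ∑' n : ℕ, u₁ n = 1) (h₂s : ∑' n : ℕ, u₂ n = 1)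
    (h₁inf : {n : ℕ | u₁ n ≠ 0}.Infinite) (h₂inf : {n : ℕ | u₂ n ≠ 0}.Infinite)
    (h₁fin : ∑' n : ℕ, ENNReal.ofReal (f n) * u₁ n < ⊤)
    (h₂fin : ∑' n : ℕ, ENNReal.ofReal (f n) * u₂ n < ⊤)
    (hsum : ∑' n : ℕ, ENNReal.ofReal (f n) * conv u₁ u₂ n = ⊤) :
    (∃ (S : Type) (_ : Countable S) (P : S → S → ℝ≥0∞) (z o : S),
        IsStochastic P ∧ IsIrreducible P ∧ IsRecurrent P ∧
          momGen f P o o < ⊤ ∧ momGen f P z z = ⊤) ∧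
      ¬ MemG f := by
  have h := stmt_14_general (F := fun n => ENNReal.ofReal (f n))
    (fun _ _ h => ENNReal.ofReal_le_ofReal (hmono h)) (fun _ => ENNReal.ofReal_ne_top)
    ⟨u₁, h₁s ▸ ENNReal.summable.hasSum⟩ ⟨u₂, h₂s ▸ ENNReal.summable.hasSum⟩ h₁fin h₂fin hsum
  exact ⟨h, not_memG_of_exists h⟩

end MCPaper
end
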